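/- Let G₁ be a separable metric space, G₂ a metric space, (E, ℰ) a measurable space and F a measure on (E, ℰ). Let B ⊆ G₁ be any subset, C ⊆ G₂ a closed subset, and let δ : G₁ × E → G₂ be a measurable map such that δ(·, x) : G₁ → G₂ is continuous for every x ∈ E. If for every h ∈ B one has δ(h,x) ∈ C for F-almost all x ∈ E, then there is a single F-null set N ∈ ℰ such that for every x ∈ E ∖ N one has δ(h,x) ∈ C for all h ∈ B. -/

import Mathlib

open MeasureTheory

theorem eventually_forall_mem_of_isClosed {ι X Y : Type*}
    [TopologicalSpace ι] [TopologicalSpace.SeparableSpace ι] [TopologicalSpace Y]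
    {l : Filter X} [CountableInterFilter l] {C : Set Y} (hC : IsClosed C) {f : ι → X → Y}
    (hcont : ∀ᶠ x in l, Continuous fun i => f i x) (hmem : ∀ i, ∀ᶠ x in l, f i x ∈ C) :
    ∀ᶠ x in l, ∀ i, f i x ∈ C := by
  obtain ⟨D, hDcountable, hDdense⟩ := TopologicalSpace.exists_countable_dense ι
  have hmemD : ∀ᶠ x in l, ∀ i ∈ D, f i x ∈ C :=
    (eventually_countable_ball hDcountable).2 fun i _ => hmem i
  filter_upwards [hcont, hmemD] with x hx hxD
  exact hDdense.induction hxD (hC.preimage hx)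

theorem stmt_3_general {G₁ G₂ E : Type*} [TopologicalSpace G₁] [TopologicalSpace G₂]
    [MeasurableSpace E] (F : Measure E)
    (B : Set G₁) [TopologicalSpace.SeparableSpace B] (C : Set G₂) (hC : IsClosed C)
    (δ : G₁ → E → G₂) (hδcont : ∀ᵐ x ∂F, ContinuousOn (fun h => δ h x) B)
    (hae : ∀ h ∈ B, ∀ᵐ x ∂F, δ h x ∈ C) :
    ∃ N : Set E, MeasurableSet N ∧ F N = 0 ∧ ∀ x ∉ N, ∀ h ∈ B, δ h x ∈ C := by
  have hmem : ∀ᵐ x ∂F, ∀ h : B, δ h x ∈ C :=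
    eventually_forall_mem_of_isClosed hC (hδcont.mono fun _ hx => hx.domRestrict)
      fun h => hae h h.2
  obtain ⟨S, hSae, hSmeas, hS⟩ := hmem.exists_measurable_mem
  exact ⟨Sᶜ, hSmeas.compl, mem_ae_iff.1 hSae,
    fun x hx h hh => hS x (Set.notMem_compl_iff.1 hx) ⟨h, hh⟩⟩

theorem stmt_3
    {G₁ G₂ E : Type*}
    [MetricSpace G₁] [TopologicalSpace.SeparableSpace G₁]
    [MeasurableSpace G₁] [BorelSpace G₁]
    [MetricSpace G₂] [MeasurableSpace G₂] [BorelSpace G₂]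
    [MeasurableSpace E] (F : Measure E)
    (B : Set G₁) (C : Set G₂) (hC : IsClosed C)
    (δ : G₁ → E → G₂)
    (hδmeas : Measurable (Function.uncurry δ))
    (hδcont : ∀ x : E, Continuous fun h => δ h x)
    (hae : ∀ h ∈ B, ∀ᵐ x ∂F, δ h x ∈ C) :
    ∃ N : Set E, MeasurableSet N ∧ F N = 0 ∧ ∀ x ∉ N, ∀ h ∈ B, δ h x ∈ C := by
  have : TopologicalSpace.SeparableSpace B :=
    (TopologicalSpace.IsSeparable.of_separableSpace B).separableSpace
  exact stmt_3_general F B C hC δ (.of_forall fun x => (hδcont x).continuousOn) hae
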